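/- For any sequence γ=(γ_q)_{q≥1} of real numbers, the set of α∈[0,1] such that ‖qα−γ_q‖ < 1/q for infinitely many q∈ℕ has Lebesgue measure 1. -/

import Mathlib

open MeasureTheory

/-- Distance from a real number to the nearest integer. -/
noncomputable def distNearestInt (x : ℝ) : ℝ := |x - round x|

lemma intervalIntegrable_fsum {f : ℕ → ℝ → ℝ} (s : Finset ℕ) {a b : ℝ}
    (h : ∀ i ∈ s, IntervalIntegrable (f i) volume a b) :
    IntervalIntegrable (fun x => ∑ i ∈ s, f i x) volume a b := by
  have := IntervalIntegrable.sum s h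
  have e : (fun x => ∑ i ∈ s, f i x) = ∑ i ∈ s, f i := by
    ext x; simp
  rw [e]; exact this

/-- indicator of `‖x‖ < δ` -/
noncomputable def phiInd (δ x : ℝ) : ℝ := if distNearestInt x < δ then 1 else 0

lemma distNearestInt_measurable : Measurable distNearestInt := by
  unfold distNearestInt
  simp_rw [round_eq]
  have h : Measurable (fun x : ℝ => ((⌊x + 1/2⌋ : ℤ) : ℝ)) :=
    (measurable_from_top (f := fun n : ℤ => (n : ℝ))).comp
      (Int.measurable_floor.comp (measurable_id.add_const _))
  exact continuous_abs.measurable.comp (measurable_id.sub h)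

lemma phiInd_measurable (δ : ℝ) : Measurable (phiInd δ) := by
  unfold phiInd
  exact Measurable.ite (measurableSet_lt distNearestInt_measurable measurable_const)
    measurable_const measurable_const

lemma phiInd_nonneg (δ x : ℝ) : 0 ≤ phiInd δ x := by unfold phiInd; split_ifs <;> norm_num
lemma phiInd_le (δ x : ℝ) : phiInd δ x ≤ 1 := by unfold phiInd; split_ifs <;> norm_num

lemma distNearestInt_add_int (x : ℝ) (n : ℤ) : distNearestInt (x + n) = distNearestInt x := by
  unfold distNearestInt; rw [round_add_intCast]; push_cast; congr 1; ring

lemma phiInd_add_int (δ x : ℝ) (n : ℤ) : phiInd δ (x + n) = phiInd δ x := by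
  unfold phiInd; rw [distNearestInt_add_int]

lemma phiInd_periodic (δ : ℝ) : Function.Periodic (phiInd δ) 1 := by
  intro x; simpa using phiInd_add_int δ x 1

lemma bdd_intervalIntegrable {f : ℝ → ℝ} (hf : Measurable f) (C : ℝ) (h : ∀ x, |f x| ≤ C)
    (a b : ℝ) : IntervalIntegrable f volume a b := by
  rw [intervalIntegrable_iff]
  apply Measure.integrableOn_of_bounded (M := C)
  · simp [Set.uIoc]
  · exact hf.aestronglyMeasurable
  · exact Filter.Eventually.of_forall (fun x => by simpa using h x)

lemma phiInd_abs (δ x : ℝ) : |phiInd δ x| ≤ 1 := by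
  rw [abs_of_nonneg (phiInd_nonneg _ _)]; exact phiInd_le _ _

lemma phiInd_integral (δ : ℝ) (h0 : 0 < δ) (h1 : δ ≤ 1/2) :
    ∫ x in (0:ℝ)..1, phiInd δ x = 2 * δ := by
  have h := (phiInd_periodic δ).intervalIntegral_add_eq 0 (-(1/2))
  rw [zero_add] at h
  rw [h, intervalIntegral.integral_of_le (by norm_num), ← integral_Ico_eq_integral_Ioc]
  have e : ∀ x ∈ Set.Ico (-(1/2):ℝ) (-(1/2)+1),
      phiInd δ x = (Set.Ioo (-δ) δ).indicator (fun _ => (1:ℝ)) x := by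
    intro x hx
    have hr : round x = 0 := by
      rw [round_eq, Int.floor_eq_iff]
      constructor <;> [simp; simp] <;> linarith [hx.1, hx.2]
    unfold phiInd distNearestInt
    rw [hr]
    simp [Set.indicator, abs_lt]
  rw [setIntegral_congr_fun measurableSet_Ico e, setIntegral_indicator measurableSet_Ioo]
  have : Set.Ico (-(1/2):ℝ) (-(1/2)+1) ∩ Set.Ioo (-δ) δ = Set.Ioo (-δ) δ := by
    apply Set.inter_eq_right.2
    intro x hx
    constructor <;> linarith [hx.1, hx.2]
  rw [this]
  simp [measureReal_def, Real.volume_Ioo]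
  rw [ENNReal.toReal_ofReal (by linarith)]; ring

/-- The indicator of the `q`-th set. -/
noncomputable def FInd (γ : ℕ → ℝ) (q : ℕ) (a : ℝ) : ℝ := phiInd (1 / q) (q * a - γ q)

lemma FInd_measurable (γ : ℕ → ℝ) (q : ℕ) : Measurable (FInd γ q) :=
  (phiInd_measurable _).comp ((measurable_id.const_mul _).sub_const _)

lemma FInd_integral (γ : ℕ → ℝ) (q : ℕ) (hq : 2 ≤ q) :
    ∫ x in (0:ℝ)..1, FInd γ q x = 2 / q := by
  have hq' : (2:ℝ) ≤ q := by exact_mod_cast hq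
  have hq0 : (q:ℝ) ≠ 0 := by positivity
  unfold FInd
  rw [intervalIntegral.integral_comp_mul_sub (fun x => phiInd (1/q) x) hq0]
  have h := (phiInd_periodic (1/q)).intervalIntegral_add_zsmul_eq q (-γ q)
    (fun a b => bdd_intervalIntegrable (phiInd_measurable _) 1 (phiInd_abs _) a b)
  have h2 := (phiInd_periodic (1/q)).intervalIntegral_add_eq 0 (-γ q)
  rw [zero_add] at h2
  rw [← h2, phiInd_integral _ (by positivity) (by
    exact one_div_le_one_div_of_le (by norm_num) hq')] at h
  simp only [zsmul_eq_mul, Int.cast_natCast, mul_one] at h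
  have e1 : (q:ℝ) * 0 - γ q = -γ q := by ring
  have e2 : (q:ℝ) * 1 - γ q = -γ q + q := by ring
  rw [e1, e2, h]
  simp; field_simp

lemma FInd_shift (γ : ℕ → ℝ) (r : ℕ) (hr : 0 < r) (x : ℝ) (j : ℕ) :
    FInd γ r (x + j / r) = FInd γ r x := by
  have hr0 : (r:ℝ) ≠ 0 := by positivity
  unfold FInd
  have : (r:ℝ) * (x + j / r) - γ r = (r * x - γ r) + (j:ℤ) := by
    push_cast; field_simp; ring
  rw [this, phiInd_add_int]

lemma FInd_periodic (γ : ℕ → ℝ) (r : ℕ) : Function.Periodic (FInd γ r) 1 := by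
  intro x
  unfold FInd
  have : (r:ℝ) * (x + 1) - γ r = (r * x - γ r) + (r:ℤ) := by
    push_cast; ring
  rw [this, phiInd_add_int]

/-- Counting bound. -/
lemma sum_shift_le (γ : ℕ → ℝ) (q r : ℕ) (hq : 0 < q) (hr : 0 < r) (hc : Nat.Coprime q r)
    (x : ℝ) : ∑ j ∈ Finset.range r, FInd γ q (x + j / r) ≤ 2 * r / q + 1 := by
  have hr0 : (0:ℝ) < r := by positivity
  have hq0 : (0:ℝ) < q := by positivity
  unfold FInd phiInd
  rw [← Finset.sum_filter, Finset.sum_const, nsmul_eq_mul, mul_one]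
  set S := Finset.filter (fun j : ℕ => distNearestInt (q * (x + j / r) - γ q) < 1 / q)
    (Finset.range r) with hS
  set y : ℝ := r * (q * x - γ q) with hy
  set m : ℕ → ℤ := fun j => round ((q:ℝ) * (x + j / r) - γ q) with hm
  have hcard : S.card ≤ (Finset.Icc (⌊-y - r / q⌋ + 1) (⌈-y + r / q⌉ - 1)).card := by
    apply Finset.card_le_card_of_injOn (fun j => (q:ℤ) * j - r * m j)
    · intro j hj
      have hj2 := (Finset.mem_filter.1 hj).2
      unfold distNearestInt at hj2
      change |((q:ℝ) * (x + j / r) - γ q) - (m j : ℝ)| < 1 / q at hj2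
      have h3 : |y + ((q:ℝ) * j - r * m j)| < r / q := by
        have : y + ((q:ℝ) * j - r * m j) = r * (((q:ℝ) * (x + j / r) - γ q) - (m j : ℝ)) := by
          rw [hy]; field_simp; ring
        rw [this, abs_mul, abs_of_pos hr0]
        calc (r:ℝ) * _ < r * (1 / q) := by gcongr
          _ = r / q := by ring
      rw [abs_lt] at h3
      simp only [Finset.coe_Icc, Set.mem_Icc]
      constructor
      · rw [Int.add_one_le_iff, Int.floor_lt]; push_cast; linarith [h3.1]
      · rw [Int.le_sub_one_iff, Int.lt_ceil]; push_cast; linarith [h3.2]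
    · intro i hi j hj hij
      have hi2 := Finset.mem_range.1 (Finset.mem_filter.1 hi).1
      have hj2 := Finset.mem_range.1 (Finset.mem_filter.1 hj).1
      simp only at hij
      have hd : (r:ℤ) ∣ (q:ℤ) * ((j:ℤ) - i) := ⟨m j - m i, by linarith⟩
      have hd2 : (r:ℤ) ∣ (j:ℤ) - i :=
        (Int.isCoprime_iff_gcd_eq_one.2 (by simpa using hc.symm)).dvd_of_dvd_mul_left hd
      have h4 := Nat.modEq_iff_dvd.2 hd2
      exact h4.eq_of_lt_of_lt hi2 hj2
  rw [Int.card_Icc] at hcard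
  have h5 : ((⌈-y + r / q⌉ - 1 + 1 - (⌊-y - r / q⌋ + 1)).toNat : ℝ) ≤ 2 * r / q + 1 := by
    have a1 := Int.ceil_lt_add_one (-y + r / q)
    have a2 := Int.lt_floor_add_one (-y - r / q)
    have a3 : (2:ℝ) * r / q = 2 * (r / q) := by ring
    rcases le_total 0 (⌈-y + r / q⌉ - 1 + 1 - (⌊-y - r / q⌋ + 1)) with h | h
    · have : ((⌈-y + r / q⌉ - 1 + 1 - (⌊-y - r / q⌋ + 1)).toNat : ℝ)
          = ((⌈-y + r / q⌉ - 1 + 1 - (⌊-y - r / q⌋ + 1) : ℤ) : ℝ) := by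
        exact_mod_cast Int.toNat_of_nonneg h
      rw [this]; push_cast; linarith
    · rw [Int.toNat_of_nonpos h]; simp; positivity
  exact le_trans (by exact_mod_cast hcard) h5

lemma FInd_abs (γ : ℕ → ℝ) (q : ℕ) (x : ℝ) : |FInd γ q x| ≤ 1 := phiInd_abs _ _
lemma FInd_nonneg (γ : ℕ → ℝ) (q : ℕ) (x : ℝ) : 0 ≤ FInd γ q x := phiInd_nonneg _ _

lemma mul_abs_le {a b : ℝ} (ha : |a| ≤ 1) (hb : |b| ≤ 1) : |a * b| ≤ 1 := by
  rw [abs_mul]; exact mul_le_one₀ ha (abs_nonneg _) hb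

lemma pair_le (γ : ℕ → ℝ) (q r : ℕ) (hq : 0 < q) (hr : 2 ≤ r) (hc : Nat.Coprime q r) :
    ∫ x in (0:ℝ)..1, FInd γ q x * FInd γ r x ≤ (2 / q) * (2 / r) + 2 / r ^ 2 := by
  have hr0 : (0:ℝ) < r := by positivity
  have hq0 : (0:ℝ) < q := by positivity
  have hper : Function.Periodic (fun x => FInd γ q x * FInd γ r x) 1 := by
    intro x; simp only [FInd_periodic γ q x, FInd_periodic γ r x]
  have hm : ∀ j : ℕ, Measurable (fun x : ℝ => FInd γ q (x + j / r)) := fun j =>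
    (FInd_measurable γ q).comp (measurable_id.add_const _)
  have hshift : ∀ j : ℕ, ∫ x in (0:ℝ)..1, FInd γ q (x + j / r) * FInd γ r x
      = ∫ x in (0:ℝ)..1, FInd γ q x * FInd γ r x := by
    intro j
    have h1 : ∀ x, FInd γ q (x + j / r) * FInd γ r x
        = (fun x => FInd γ q x * FInd γ r x) (x + j / r) := by
      intro x; simp only; rw [FInd_shift γ r (by omega) x j]
    simp_rw [h1]
    rw [intervalIntegral.integral_comp_add_right (fun x => FInd γ q x * FInd γ r x)]
    have := hper.intervalIntegral_add_eq (0 + (j:ℝ)/r) 0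
    rw [zero_add (1:ℝ)] at this
    rw [← this]; congr 1; ring
  have hsum : (r:ℝ) * ∫ x in (0:ℝ)..1, FInd γ q x * FInd γ r x
      = ∫ x in (0:ℝ)..1, (∑ j ∈ Finset.range r, FInd γ q (x + j / r)) * FInd γ r x := by
    simp_rw [Finset.sum_mul]
    rw [intervalIntegral.integral_finsetSum]
    · simp_rw [hshift]; simp
    · intro j _
      exact bdd_intervalIntegrable ((hm j).mul (FInd_measurable γ r)) 1
        (fun x => mul_abs_le (FInd_abs _ _ _) (FInd_abs _ _ _)) _ _
  have hle : ∫ x in (0:ℝ)..1, (∑ j ∈ Finset.range r, FInd γ q (x + j / r)) * FInd γ r x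
      ≤ ∫ x in (0:ℝ)..1, (2 * r / q + 1) * FInd γ r x := by
    apply intervalIntegral.integral_mono_on (by norm_num)
    · simp_rw [Finset.sum_mul]
      apply intervalIntegrable_fsum
      intro j _
      exact bdd_intervalIntegrable ((hm j).mul (FInd_measurable γ r)) 1
        (fun x => mul_abs_le (FInd_abs _ _ _) (FInd_abs _ _ _)) _ _
    · exact (bdd_intervalIntegrable (FInd_measurable γ r) 1 (FInd_abs _ _) _ _).const_mul _
    · intro x _
      exact mul_le_mul_of_nonneg_right (sum_shift_le γ q r hq (by omega) hc x) (FInd_nonneg _ _ _)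
  rw [← hsum, intervalIntegral.integral_const_mul, FInd_integral γ r hr] at hle
  rw [← mul_le_mul_iff_right₀ hr0]
  refine hle.trans (le_of_eq ?_)
  field_simp

lemma FInd_sq (γ : ℕ → ℝ) (q : ℕ) (x : ℝ) : FInd γ q x * FInd γ q x = FInd γ q x := by
  unfold FInd phiInd; split_ifs <;> simp

lemma pair_le' (γ : ℕ → ℝ) (q r : ℕ) (hq : q.Prime) (hr : r.Prime) :
    ∫ x in (0:ℝ)..1, FInd γ q x * FInd γ r x ≤ (2 / q) * (2 / r) +
      ((if q < r then 2 / (r:ℝ) ^ 2 else 0) + (if r < q then 2 / (q:ℝ) ^ 2 else 0)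
        + (if q = r then 2 / (q:ℝ) else 0)) := by
  rcases lt_trichotomy q r with h | h | h
  · have := pair_le γ q r hq.pos hr.two_le ((Nat.coprime_primes hq hr).2 h.ne)
    simpa [h, h.ne, h.not_gt] using this
  · subst h
    simp_rw [FInd_sq]
    rw [FInd_integral γ q hq.two_le]
    simp
    positivity
  · have := pair_le γ r q hr.pos hq.two_le ((Nat.coprime_primes hr hq).2 h.ne)
    simp_rw [mul_comm (FInd γ r _)] at this
    rw [mul_comm (2 / (r:ℝ))] at this
    simpa [h, h.ne', h.not_gt] using this

/-- primes below N -/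
def primesB (N : ℕ) : Finset ℕ := (Finset.range N).filter Nat.Prime

lemma sum_lt_le (P : Finset ℕ) (r : ℕ) (hr : 0 < r) :
    ∑ q ∈ P, (if q < r then 2 / (r:ℝ) ^ 2 else 0) ≤ 2 / (r:ℝ) := by
  have hr0 : (0:ℝ) < r := by positivity
  rw [← Finset.sum_filter, Finset.sum_const, nsmul_eq_mul]
  have : (P.filter (fun q => q < r)).card ≤ r := by
    calc _ ≤ (Finset.range r).card := Finset.card_le_card (fun q hq => by
            simpa using (Finset.mem_filter.1 hq).2)
      _ = r := Finset.card_range r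
  have h2 : ((P.filter (fun q => q < r)).card : ℝ) ≤ r := by exact_mod_cast this
  calc _ ≤ (r:ℝ) * (2 / (r:ℝ)^2) := by gcongr
    _ = 2 / r := by field_simp

noncomputable def Mean (N : ℕ) : ℝ := ∑ q ∈ primesB N, 2 / (q:ℝ)

lemma second_moment (γ : ℕ → ℝ) (N : ℕ) :
    ∫ x in (0:ℝ)..1, (∑ q ∈ primesB N, FInd γ q x - Mean N) ^ 2 ≤ 3 * Mean N := by
  have hp : ∀ q ∈ primesB N, q.Prime := fun q hq => (Finset.mem_filter.1 hq).2
  have hi : ∀ q, IntervalIntegrable (FInd γ q) volume 0 1 := fun q =>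
    bdd_intervalIntegrable (FInd_measurable γ q) 1 (FInd_abs _ _) _ _
  have hii : ∀ q r, IntervalIntegrable (fun x => FInd γ q x * FInd γ r x) volume 0 1 := fun q r =>
    bdd_intervalIntegrable ((FInd_measurable γ q).mul (FInd_measurable γ r)) 1
        (fun x => mul_abs_le (FInd_abs _ _ _) (FInd_abs _ _ _)) _ _
  have hS : IntervalIntegrable (fun x => ∑ q ∈ primesB N, FInd γ q x) volume 0 1 :=
    intervalIntegrable_fsum _ (fun q _ => hi q)
  have hSS : IntervalIntegrable (fun x => ∑ q ∈ primesB N, ∑ r ∈ primesB N,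
      FInd γ q x * FInd γ r x) volume 0 1 :=
    intervalIntegrable_fsum _ (fun q _ => intervalIntegrable_fsum _ (fun r _ => hii q r))
  have e : ∀ x, (∑ q ∈ primesB N, FInd γ q x - Mean N) ^ 2
      = (∑ q ∈ primesB N, ∑ r ∈ primesB N, FInd γ q x * FInd γ r x)
        - 2 * Mean N * (∑ q ∈ primesB N, FInd γ q x) + Mean N ^ 2 := by
    intro x; rw [← Finset.sum_mul_sum]; ring
  have hES : ∫ x in (0:ℝ)..1, ∑ q ∈ primesB N, FInd γ q x = Mean N := by
    rw [intervalIntegral.integral_finsetSum (fun q _ => hi q)]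
    exact Finset.sum_congr rfl (fun q hq => FInd_integral γ q (hp q hq).two_le)
  simp_rw [e]
  rw [intervalIntegral.integral_add (hSS.sub (hS.const_mul _)) (by simp),
    intervalIntegral.integral_sub hSS (hS.const_mul _), intervalIntegral.integral_const_mul, hES]
  have hESS : ∫ x in (0:ℝ)..1, ∑ q ∈ primesB N, ∑ r ∈ primesB N, FInd γ q x * FInd γ r x
      ≤ Mean N ^ 2 + 3 * Mean N := by
    rw [intervalIntegral.integral_finsetSum
      (fun q _ => intervalIntegrable_fsum _ (fun r _ => hii q r))]
    simp_rw [intervalIntegral.integral_finsetSum (fun r _ => hii _ r)]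
    calc _ ≤ ∑ q ∈ primesB N, ∑ r ∈ primesB N, ((2 / (q:ℝ)) * (2 / r) +
          ((if q < r then 2 / (r:ℝ) ^ 2 else 0) + (if r < q then 2 / (q:ℝ) ^ 2 else 0)
          + (if q = r then 2 / (q:ℝ) else 0))) :=
          Finset.sum_le_sum (fun q hq => Finset.sum_le_sum (fun r hr =>
            pair_le' γ q r (hp q hq) (hp r hr)))
      _ = Mean N ^ 2 + (∑ r ∈ primesB N, ∑ q ∈ primesB N, (if q < r then 2 / (r:ℝ) ^ 2 else 0)
          + ∑ q ∈ primesB N, ∑ r ∈ primesB N, (if r < q then 2 / (q:ℝ) ^ 2 else 0)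
          + ∑ q ∈ primesB N, ∑ r ∈ primesB N, (if q = r then 2 / (q:ℝ) else 0)) := by
          simp_rw [Finset.sum_add_distrib]
          rw [← Finset.sum_mul_sum, Finset.sum_comm (f := fun q r : ℕ =>
            (if q < r then 2 / (r:ℝ) ^ 2 else 0))]
          unfold Mean; ring
      _ ≤ Mean N ^ 2 + (Mean N + Mean N + Mean N) := by
          gcongr
          · exact Finset.sum_le_sum (fun r hr => sum_lt_le _ r (hp r hr).pos)
          · exact Finset.sum_le_sum (fun r hr => sum_lt_le _ r (hp r hr).pos)
          · apply Finset.sum_le_sum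
            intro q hq
            simp [hq]
      _ = _ := by ring
  simp
  nlinarith

lemma Mean_tendsto : Filter.Tendsto Mean Filter.atTop Filter.atTop := by
  have h := not_summable_one_div_on_primes
  rw [not_summable_iff_tendsto_nat_atTop_of_nonneg] at h
  · have h2 := h.const_mul_atTop (show (0:ℝ) < 2 by norm_num)
    refine h2.congr (fun N => ?_)
    unfold Mean primesB
    rw [Finset.sum_filter, Finset.mul_sum]
    refine Finset.sum_congr rfl (fun q _ => ?_)
    by_cases hq : q.Prime
    · simp [Set.indicator, hq]; ring
    · simp [Set.indicator, hq]
  · intro n; apply Set.indicator_nonneg; intro x _; positivity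

lemma small_bad_set (γ : ℕ → ℝ) (K : ℝ) :
    volume.restrict (Set.Ioc (0:ℝ) 1) {x | ∀ N, ∑ q ∈ primesB N, FInd γ q x ≤ K} = 0 := by
  set μ := volume.restrict (Set.Ioc (0:ℝ) 1) with hμ
  set B := {x | ∀ N, ∑ q ∈ primesB N, FInd γ q x ≤ K}
  have key : ∀ N, 2 * K < Mean N → 0 < Mean N → μ.real B ≤ 12 / Mean N := by
    intro N hN hN0
    have hmeas : Measurable (fun x => (∑ q ∈ primesB N, FInd γ q x - Mean N) ^ 2) :=
      ((Finset.measurable_sum _ (fun q _ => FInd_measurable γ q)).sub_const _).pow_const _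
    have hint : Integrable (fun x => (∑ q ∈ primesB N, FInd γ q x - Mean N) ^ 2) μ := by
      have := bdd_intervalIntegrable hmeas (((primesB N).card + Mean N) ^ 2) (fun x => by
        rw [abs_pow]
        gcongr
        refine (abs_sub _ _).trans ?_
        rw [abs_of_pos hN0]
        gcongr
        refine (Finset.abs_sum_le_sum_abs _ _).trans ?_
        refine (Finset.sum_le_sum (fun q _ => FInd_abs γ q x)).trans ?_
        simp) 0 1
      rwa [intervalIntegrable_iff_integrableOn_Ioc_of_le (by norm_num)] at this
    have h1 := mul_meas_ge_le_integral_of_nonneg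
      (Filter.Eventually.of_forall (fun x => sq_nonneg _)) hint ((Mean N / 2) ^ 2)
    have h2 := second_moment γ N
    rw [intervalIntegral.integral_of_le (by norm_num)] at h2
    have h3 : μ.real B ≤ μ.real {x | (Mean N / 2) ^ 2 ≤
        (∑ q ∈ primesB N, FInd γ q x - Mean N) ^ 2} := by
      refine measureReal_mono ?_ (measure_ne_top _ _)
      intro x hx
      have := hx N
      simp only [Set.mem_ofPred_eq]
      nlinarith
    have h4 : (Mean N / 2) ^ 2 * μ.real B ≤ 3 * Mean N :=
      (mul_le_mul_of_nonneg_left h3 (sq_nonneg _)).trans (h1.trans h2)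
    rw [le_div_iff₀ hN0]
    have h5 : Mean N * (μ.real B * Mean N) ≤ Mean N * 12 := by nlinarith
    exact le_of_mul_le_mul_left h5 hN0
  have hlim : Filter.Tendsto (fun N => 12 / Mean N) Filter.atTop (nhds 0) :=
    Mean_tendsto.const_div_atTop 12
  have hle : μ.real B ≤ 0 := by
    apply ge_of_tendsto hlim
    filter_upwards [Mean_tendsto.eventually_gt_atTop (2 * K),
      Mean_tendsto.eventually_gt_atTop 0] with N h1 h2 using key N h1 h2
  have h0 : μ.real B = 0 := le_antisymm hle measureReal_nonneg
  exact (measureReal_eq_zero_iff).1 h0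

theorem stmt1 (γ : ℕ → ℝ) :
    volume {α : ℝ | α ∈ Set.Icc (0:ℝ) 1 ∧
      {q : ℕ | 1 ≤ q ∧ distNearestInt (q * α - γ q) < 1 / q}.Infinite} = 1 := by
  set T := {α : ℝ | {q : ℕ | 1 ≤ q ∧ distNearestInt (q * α - γ q) < 1 / q}.Infinite} with hT
  have hae : ∀ᵐ x ∂(volume.restrict (Set.Ioc (0:ℝ) 1)), x ∈ T := by
    have h : ∀ᵐ x ∂(volume.restrict (Set.Ioc (0:ℝ) 1)), ∀ K : ℕ,
        ¬ ∀ N, ∑ q ∈ primesB N, FInd γ q x ≤ K := by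
      rw [ae_all_iff]
      intro K
      rw [ae_iff]
      simpa using small_bad_set γ K
    filter_upwards [h] with x hx
    by_contra hfin
    simp only [hT, Set.mem_ofPred_eq, Set.not_infinite] at hfin
    apply hx hfin.toFinset.card
    intro N
    unfold FInd phiInd
    rw [← Finset.sum_filter, Finset.sum_const, nsmul_eq_mul, mul_one]
    norm_cast
    apply Finset.card_le_card
    intro q hq
    obtain ⟨h1, h2⟩ := Finset.mem_filter.1 hq
    rw [Set.Finite.mem_toFinset]
    exact ⟨(Finset.mem_filter.1 h1).2.one_le, h2⟩
  apply le_antisymm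
  · calc _ ≤ volume (Set.Icc (0:ℝ) 1) := measure_mono (fun x hx => hx.1)
      _ = 1 := by simp
  · rw [ae_restrict_iff' measurableSet_Ioc] at hae
    calc (1:ENNReal) = volume (Set.Ioc (0:ℝ) 1) := by simp
      _ ≤ _ := by
        apply measure_mono_ae
        filter_upwards [hae] with x hx hx2
        exact ⟨Set.Ioc_subset_Icc_self hx2, hx hx2⟩
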